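/- Let 2 ≤ m ≤ n be integers with n ≡ m (mod m−1), and let G ≤ Sym(m). Then there exists a subgroup H ≤ Sym(n) and an injective group homomorphism from V_m(G) into V_n(H). -/

import Mathlib

/-!
A homeomorphism lies in `V_n(H)` as soon as it is locally of the form `p‖u ↦ q‖g(u)` with `g ∈ H`:
by compactness it is then given by a table whose domain code consists of all words of some fixed
length. Hence membership, unlike the choice of a table, is a local matter.

Since a prefix replacement determines its words and its permutation, `V_m(G)` acts by prefix
replacements not only on `C_m` but on every `Sym(m)`-set `X` with an equivariant bijection
`X ≃ A_m × X`. For `n = (m - 1)k + 1` let `X` consist of `m k` copies of `C_n`, indexed by pairs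
`(a, b)`. Splitting each of the `m` copies `(a, 0)` into its `n` cones leaves
`m (k - 1) + m n = m (m k)` copies, as many as there are in `A_m × X`. The bijection is equivariant
if the copies `(a, b)` with `b ≠ 0` go to the diagonal positions `(a, (a, b))` and, for each `a`,
the cones of `(a, 0)` fill the other positions `(c, (a, b))`: then `g` merely permutes the letters
of `A_n`, in a way depending on `a`. Finally `X` is embedded in `C_n` as a union of cones, and the
action is extended by the identity.
-/

namespace Paper

/-- Concatenation of a finite word with an infinite word. -/
def cat {n : ℕ} (w : List (Fin n)) (ζ : ℕ → Fin n) : ℕ → Fin n :=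
  fun i => if h : i < w.length then w[i]'h else ζ (i - w.length)

/-- The finite word `w` is a prefix of the infinite word `ζ`. -/
def IsPref {n : ℕ} (w : List (Fin n)) (ζ : ℕ → Fin n) : Prop :=
  ∀ (i : ℕ) (h : i < w.length), w[i]'h = ζ i

/-- An indexed family of finite words is a complete prefix code: every infinite
word has exactly one member of the family as a prefix. -/
def IsCPC {n : ℕ} {ι : Type} (P : ι → List (Fin n)) : Prop :=
  ∀ ζ : ℕ → Fin n, ∃! i : ι, IsPref (P i) ζ

/-- `f` is the map described by the table with domain code `P`, range code `Q` and
permutations `σ, τ`: it sends `pᵢ‖σᵢ(u)` to `qᵢ‖τᵢ(u)`. -/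
def TableFun {n : ℕ} {ι : Type} (P Q : ι → List (Fin n))
    (σ τ : ι → Equiv.Perm (Fin n)) (f : (ℕ → Fin n) → (ℕ → Fin n)) : Prop :=
  ∀ (i : ι) (u : ℕ → Fin n),
    f (cat (P i) (fun j => σ i (u j))) = cat (Q i) (fun j => τ i (u j))

/-- A table over a subgroup `H ≤ Sym(n)`. -/
structure Table (n : ℕ) (H : Subgroup (Equiv.Perm (Fin n))) where
  k : ℕ
  P : Fin k → List (Fin n)
  Q : Fin k → List (Fin n)
  σ : Fin k → Equiv.Perm (Fin n)
  τ : Fin k → Equiv.Perm (Fin n)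
  σ_mem : ∀ i, σ i ∈ H
  τ_mem : ∀ i, τ i ∈ H
  hP : IsCPC P
  hQ : IsCPC Q

/-- The table `T` induces the map `f`. -/
def Induces {n : ℕ} {H : Subgroup (Equiv.Perm (Fin n))} (T : Table n H)
    (f : (ℕ → Fin n) → (ℕ → Fin n)) : Prop :=
  TableFun T.P T.Q T.σ T.τ f

/-- The symmetric Thompson group `V_n(H)`, as the set of homeomorphisms of the
Cantor space `C_n = A_n^ℕ` induced by tables over `H`. -/
def Vset (n : ℕ) (H : Subgroup (Equiv.Perm (Fin n))) :
    Set ((ℕ → Fin n) ≃ₜ (ℕ → Fin n)) :=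
  { f | ∃ T : Table n H, Induces T ⇑f }

open Equiv (Perm)

section Words

variable {n : ℕ}

theorem cat_nil (u : ℕ → Fin n) : cat [] u = u := by
  funext i
  simp [cat]

theorem cat_cons_zero (a : Fin n) (w : List (Fin n)) (u : ℕ → Fin n) : cat (a :: w) u 0 = a := by
  simp [cat]

theorem cat_cons_succ (a : Fin n) (w : List (Fin n)) (u : ℕ → Fin n) (i : ℕ) :
    cat (a :: w) u (i + 1) = cat w u i := by
  simp [cat]

theorem cat_head_tail (u : ℕ → Fin n) : cat [u 0] (fun j => u (j + 1)) = u := by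
  funext i
  cases i with
  | zero => rw [cat_cons_zero]
  | succ i => rw [cat_cons_succ, cat_nil]

theorem cat_append (v w : List (Fin n)) (u : ℕ → Fin n) :
    cat (v ++ w) u = cat v (cat w u) := by
  induction v with
  | nil => rw [List.nil_append, cat_nil]
  | cons a v ih =>
    funext i
    cases i with
    | zero => simp [cat_cons_zero]
    | succ i => simp [cat_cons_succ, ih]

theorem cat_length_add (w : List (Fin n)) (u : ℕ → Fin n) (i : ℕ) :
    cat w u (w.length + i) = u i := by
  simp [cat]

theorem cat_injective (w : List (Fin n)) : Function.Injective (cat w) := by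
  intro u v h
  funext i
  rw [← cat_length_add w u, h, cat_length_add]

theorem comp_cat (g : Fin n → Fin n) (w : List (Fin n)) (u : ℕ → Fin n) :
    g ∘ cat w u = cat (w.map g) (g ∘ u) := by
  funext i
  simp only [cat, Function.comp_apply, List.length_map]
  split <;> simp

theorem continuous_cat (w : List (Fin n)) : Continuous (cat w) := by
  refine continuous_pi fun i => ?_
  by_cases h : i < w.length
  · simpa only [cat, h, dite_true] using continuous_const
  · simpa only [cat, h, dite_false] using continuous_apply (i - w.length)

theorem isPref_cat (w : List (Fin n)) (u : ℕ → Fin n) : IsPref w (cat w u) := by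
  intro i h
  simp [cat, h]

theorem IsPref.cat_drop {w : List (Fin n)} {ζ : ℕ → Fin n} (h : IsPref w ζ) :
    cat w (fun i => ζ (w.length + i)) = ζ := by
  funext i
  by_cases hi : i < w.length
  · simpa only [cat, hi, dite_true] using h i hi
  · simp only [cat, hi, dite_false, Nat.add_sub_cancel' (not_lt.1 hi)]

theorem IsPref.exists_cat_eq {w : List (Fin n)} {ζ : ℕ → Fin n} (h : IsPref w ζ) :
    ∃ u, cat w u = ζ :=
  ⟨_, h.cat_drop⟩

theorem isPref_append_cat_iff {v w : List (Fin n)} {u : ℕ → Fin n} :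
    IsPref (v ++ w) (cat v u) ↔ IsPref w u := by
  constructor
  · intro h
    obtain ⟨s, hs⟩ := h.exists_cat_eq
    rw [cat_append] at hs
    exact cat_injective v hs ▸ isPref_cat w s
  · intro h
    obtain ⟨s, rfl⟩ := h.exists_cat_eq
    exact cat_append v w s ▸ isPref_cat (v ++ w) s

theorem IsPref.prefix_of_length_le {v w : List (Fin n)} {ζ : ℕ → Fin n} (hv : IsPref v ζ)
    (hw : IsPref w ζ) (hl : v.length ≤ w.length) : v <+: w := by
  refine List.prefix_iff_eq_take.2 (List.ext_getElem (by simp [hl]) fun i h₁ h₂ => ?_)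
  rw [List.getElem_take, hv i h₁, hw i (h₁.trans_le hl)]

theorem isOpen_setOf_isPref (w : List (Fin n)) : IsOpen {ζ : ℕ → Fin n | IsPref w ζ} := by
  have h : {ζ : ℕ → Fin n | IsPref w ζ} = ⋂ i : Fin w.length, {ζ | w[i] = ζ i} := by
    ext ζ
    simp [IsPref, Fin.forall_iff]
  rw [h]
  exact isOpen_iInter_of_finite fun i =>
    (isOpen_discrete {c | w[i] = c}).preimage (continuous_apply (i : ℕ))

theorem isPref_ofFn_iff {N : ℕ} {v : Fin N → Fin n} {ζ : ℕ → Fin n} :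
    IsPref (List.ofFn v) ζ ↔ v = fun i : Fin N => ζ i := by
  simp [IsPref, funext_iff, Fin.forall_iff]

theorem isCPC_ofFn (N : ℕ) : IsCPC fun v : Fin N → Fin n => List.ofFn v := fun ζ =>
  ⟨fun i => ζ i, isPref_ofFn_iff.2 rfl, fun _ => isPref_ofFn_iff.1⟩

theorem eq_of_cat_ofFn_eq {N : ℕ} {v v' : Fin N → Fin n} {u u' : ℕ → Fin n}
    (h : cat (List.ofFn v) u = cat (List.ofFn v') u') : v = v' :=
  (isCPC_ofFn N _).unique (isPref_cat _ u) (h ▸ isPref_cat _ u')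

theorem IsCPC.comp_equiv {ι κ : Type} {P : ι → List (Fin n)} (hP : IsCPC P) (e : κ ≃ ι) :
    IsCPC (P ∘ e) := fun ζ =>
  (e.bijective.existsUnique_iff (p := fun i => IsPref (P i) ζ)).1 (hP ζ)

theorem eq_and_eq_of_forall_cat_comp_eq [Nontrivial (Fin n)] {v w : List (Fin n)}
    {g h : Perm (Fin n)} (H : ∀ u : ℕ → Fin n, cat v (g ∘ u) = cat w (h ∘ u)) :
    v = w ∧ g = h := by
  have length_le {v w : List (Fin n)} {g h : Perm (Fin n)}
      (H : ∀ u : ℕ → Fin n, cat v (g ∘ u) = cat w (h ∘ u)) : w.length ≤ v.length := by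
    by_contra! hl
    have letter_eq (c : Fin n) : c = w[v.length] := by
      simpa [cat, hl] using congrFun (H fun _ => g.symm c) v.length
    obtain ⟨a, b, hab⟩ := exists_pair_ne (Fin n)
    exact hab ((letter_eq a).trans (letter_eq b).symm)
  have hl : v.length = w.length := (length_le fun u => (H u).symm).antisymm (length_le H)
  obtain ⟨a⟩ : Nonempty (Fin n) := inferInstance
  obtain rfl : v = w :=
    ((isPref_cat v _).prefix_of_length_le (H (fun _ => a) ▸ isPref_cat w _) hl.le).eq_of_length hl
  exact ⟨rfl, Equiv.ext fun c => congrFun (cat_injective v (H fun _ => c)) 0⟩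

theorem exists_embedding_words (E : Type*) [Finite E] (n : ℕ) [Nontrivial (Fin n)] :
    ∃ N, Nonempty (E ↪ (Fin N → Fin n)) := by
  have := Fintype.ofFinite E
  refine ⟨Fintype.card E, Function.Embedding.nonempty_of_card_le ?_⟩
  rw [Fintype.card_fun, Fintype.card_fin, Fintype.card_fin]
  exact (Nat.lt_pow_self (Fin.nontrivial_iff_two_le.1 inferInstance)).le

end Words

section PrefixReplacement

variable {n : ℕ} {f f' : (ℕ → Fin n) → (ℕ → Fin n)} {p q r w : List (Fin n)}
  {g g' : Perm (Fin n)} {H : Subgroup (Perm (Fin n))}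

/-- On the cone of words with prefix `p`, the map `f` is the prefix replacement
`p‖u ↦ q‖g(u)`. -/
def ActsOn (f : (ℕ → Fin n) → (ℕ → Fin n)) (p q : List (Fin n)) (g : Perm (Fin n)) : Prop :=
  ∀ u, f (cat p u) = cat q (g ∘ u)

theorem actsOn_id (p : List (Fin n)) : ActsOn id p p 1 := fun _ => rfl

theorem ActsOn.append (h : ActsOn f p q g) (w : List (Fin n)) :
    ActsOn f (p ++ w) (q ++ w.map g) g := by
  intro u
  rw [cat_append, h, comp_cat, cat_append]

theorem ActsOn.comp (h' : ActsOn f' q r g') (h : ActsOn f p q g) :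
    ActsOn (f' ∘ f) p r (g' * g) := by
  intro u
  rw [Function.comp_apply, h, h']
  rfl

theorem ActsOn.symm {f : Perm (ℕ → Fin n)} (h : ActsOn f p q g) : ActsOn f.symm q p g⁻¹ := by
  intro u
  rw [Equiv.symm_apply_eq, h]
  congr 1
  funext i
  simp

theorem ActsOn.unique [Nontrivial (Fin n)] {q' : List (Fin n)} (h : ActsOn f p q g)
    (h' : ActsOn f p q' g') : q = q' ∧ g = g' :=
  eq_and_eq_of_forall_cat_comp_eq fun u => (h u).symm.trans (h' u)

theorem ActsOn.isPref_apply (h : ActsOn f p q g) {ζ : ℕ → Fin n} (hp : IsPref p ζ) :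
    IsPref q (f ζ) := by
  obtain ⟨u, rfl⟩ := hp.exists_cat_eq
  exact h u ▸ isPref_cat q _

theorem ActsOn.isPref_apply_iff {f : Perm (ℕ → Fin n)} (h : ActsOn f p q g) {ζ : ℕ → Fin n} :
    IsPref q (f ζ) ↔ IsPref p ζ :=
  ⟨fun hq => f.symm_apply_apply ζ ▸ h.symm.isPref_apply hq, h.isPref_apply⟩

theorem ActsOn.isPref_append_map_symm (h : ActsOn f p q g) {ζ : ℕ → Fin n} (hp : IsPref p ζ)
    (hw : IsPref (q ++ w) (f ζ)) : IsPref (p ++ w.map g.symm) ζ := by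
  obtain ⟨u, rfl⟩ := hp.exists_cat_eq
  rw [h, isPref_append_cat_iff] at hw
  rw [isPref_append_cat_iff]
  intro i hi
  have hwi : w[i]'(by simpa using hi) = g (u i) := hw i _
  simp [hwi]

theorem TableFun.actsOn {ι : Type} {P Q : ι → List (Fin n)} {σ τ : ι → Perm (Fin n)}
    (h : TableFun P Q σ τ f) (i : ι) : ActsOn f (P i) (Q i) (τ i * (σ i)⁻¹) := by
  intro u
  simpa [Function.comp_def] using h i fun j => (σ i)⁻¹ (u j)

/-- Around every point, `f` is a prefix replacement followed by a letterwise permutation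
from `H`. -/
def LocallyActs (H : Subgroup (Perm (Fin n))) (f : (ℕ → Fin n) → (ℕ → Fin n)) : Prop :=
  ∀ ζ, ∃ p q, ∃ g ∈ H, IsPref p ζ ∧ ActsOn f p q g

theorem locallyActs_id : LocallyActs H id := fun _ =>
  ⟨[], [], 1, H.one_mem, fun _ h => absurd h (Nat.not_lt_zero _), actsOn_id []⟩

theorem LocallyActs.exists_actsOn_actsOn (hf' : LocallyActs H f') (hf : LocallyActs H f)
    (ζ : ℕ → Fin n) :
    ∃ p q r, ∃ g ∈ H, ∃ g' ∈ H, IsPref p ζ ∧ ActsOn f p q g ∧ ActsOn f' q r g' := by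
  obtain ⟨p, q, g, hg, hp, hpq⟩ := hf ζ
  obtain ⟨r, s, g', hg', hr, hrs⟩ := hf' (f ζ)
  rcases le_total r.length q.length with hl | hl
  · obtain ⟨w, rfl⟩ := hr.prefix_of_length_le (hpq.isPref_apply hp) hl
    exact ⟨p, r ++ w, s ++ w.map g', g, hg, g', hg', hp, hpq, hrs.append w⟩
  · obtain ⟨w, rfl⟩ := (hpq.isPref_apply hp).prefix_of_length_le hr hl
    have hmap : (w.map g.symm).map g = w := by simp [Function.comp_def]
    exact ⟨p ++ w.map g.symm, q ++ w, s, g, hg, g', hg', hpq.isPref_append_map_symm hp hr,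
      by simpa only [hmap] using hpq.append (w.map g.symm), hrs⟩

theorem LocallyActs.comp (hf' : LocallyActs H f') (hf : LocallyActs H f) :
    LocallyActs H (f' ∘ f) := fun ζ =>
  let ⟨p, _, r, g, hg, g', hg', hp, hpq, hqr⟩ := hf'.exists_actsOn_actsOn hf ζ
  ⟨p, r, g' * g, H.mul_mem hg' hg, hp, hqr.comp hpq⟩

theorem LocallyActs.symm {f : Perm (ℕ → Fin n)} (hf : LocallyActs H f) :
    LocallyActs H f.symm := fun ζ =>
  let ⟨p, q, g, hg, hp, hpq⟩ := hf (f.symm ζ)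
  ⟨q, p, g⁻¹, H.inv_mem hg, f.apply_symm_apply ζ ▸ hpq.isPref_apply hp, hpq.symm⟩

theorem LocallyActs.continuous (hf : LocallyActs H f) : Continuous f := by
  refine continuous_iff_continuousAt.2 fun ζ => ?_
  obtain ⟨p, q, g, -, hp, hpq⟩ := hf ζ
  have hcont : Continuous fun ξ : ℕ → Fin n => cat q (g ∘ fun i => ξ (p.length + i)) :=
    (continuous_cat q).comp (continuous_pi fun i =>
      (continuous_of_discreteTopology (f := g)).comp (continuous_apply (p.length + i)))
  refine hcont.continuousAt.congr ?_
  filter_upwards [(isOpen_setOf_isPref p).mem_nhds hp] with ξ hξ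
  rw [← hpq, IsPref.cat_drop hξ]

theorem LocallyActs.exists_forall_length_eq_actsOn (hf : LocallyActs H f) :
    ∃ N, ∀ v : List (Fin n), v.length = N → ∃ q, ∃ g ∈ H, ActsOn f v q g := by
  rcases isEmpty_or_nonempty (ℕ → Fin n) with hempty | ⟨⟨u⟩⟩
  · exact ⟨0, fun v _ => ⟨[], 1, H.one_mem, fun u => isEmptyElim u⟩⟩
  choose p q g hg hp hpq using hf
  obtain ⟨t, -, ht⟩ := isCompact_univ.elim_nhds_subcover (fun ζ => {ξ | IsPref (p ζ) ξ})
    fun ζ _ => (isOpen_setOf_isPref (p ζ)).mem_nhds (hp ζ)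
  refine ⟨t.sup fun ζ => (p ζ).length, fun v hv => ?_⟩
  obtain ⟨ζ, hζ, hpv⟩ := Set.mem_iUnion₂.1 (ht (Set.mem_univ (cat v u)))
  have hl : (p ζ).length ≤ v.length := hv ▸ Finset.le_sup (f := fun ζ => (p ζ).length) hζ
  obtain ⟨w, rfl⟩ := IsPref.prefix_of_length_le hpv (isPref_cat v u) hl
  exact ⟨q ζ ++ w.map (g ζ), g ζ, hg ζ, (hpq ζ).append w⟩

theorem IsCPC.of_actsOn {ι : Type} {P Q : ι → List (Fin n)} (hP : IsCPC P)
    {f : Perm (ℕ → Fin n)} {g : ι → Perm (Fin n)} (hf : ∀ i, ActsOn f (P i) (Q i) (g i)) :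
    IsCPC Q := by
  intro ζ
  obtain ⟨ξ, rfl⟩ := f.surjective ζ
  simpa only [(hf _).isPref_apply_iff] using hP ξ

theorem mem_Vset_iff_locallyActs {f : (ℕ → Fin n) ≃ₜ (ℕ → Fin n)} :
    f ∈ Vset n H ↔ LocallyActs H f := by
  constructor
  · rintro ⟨T, hT⟩ ζ
    obtain ⟨i, hi, -⟩ := T.hP ζ
    exact ⟨T.P i, T.Q i, _, H.mul_mem (T.τ_mem i) (H.inv_mem (T.σ_mem i)), hi,
      TableFun.actsOn hT i⟩
  · intro hf
    obtain ⟨N, hN⟩ := hf.exists_forall_length_eq_actsOn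
    choose Q g hg hQ using fun v : Fin N → Fin n => hN (List.ofFn v) List.length_ofFn
    let e : Fin (n ^ N) ≃ (Fin N → Fin n) := finFunctionFinEquiv.symm
    have hQ' : IsCPC Q := (isCPC_ofFn N).of_actsOn (f := f.toEquiv) hQ
    let T : Table n H :=
      { k := n ^ N
        P := List.ofFn ∘ e
        Q := Q ∘ e
        σ := 1
        τ := g ∘ e
        σ_mem _ := H.one_mem
        τ_mem i := hg (e i)
        hP := (isCPC_ofFn N).comp_equiv e
        hQ := hQ'.comp_equiv e }
    exact ⟨T, fun i => hQ (e i)⟩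

variable (n H) in
/-- The symmetric Thompson group `V_n(H)` as a group of permutations of the Cantor space;
continuity is automatic, and `thompsonGroup.range_toHomeomorph` identifies it with `Vset n H`. -/
def thompsonGroup : Subgroup (Perm (ℕ → Fin n)) where
  carrier := {f | LocallyActs H f}
  one_mem' := locallyActs_id
  mul_mem' := LocallyActs.comp
  inv_mem' := LocallyActs.symm

variable (n H) in
/-- The elements of the symmetric Thompson group, regarded as homeomorphisms. -/
def thompsonGroup.toHomeomorph : thompsonGroup n H →* ((ℕ → Fin n) ≃ₜ (ℕ → Fin n)) where
  toFun f := ⟨f.1, LocallyActs.continuous f.2, LocallyActs.continuous f.2.symm⟩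
  map_one' := rfl
  map_mul' _ _ := rfl

theorem thompsonGroup.toHomeomorph_injective : Function.Injective (toHomeomorph n H) := fun _ _ h =>
  Subtype.ext (congrArg Homeomorph.toEquiv h)

theorem thompsonGroup.range_toHomeomorph : Set.range (toHomeomorph n H) = Vset n H := by
  ext f
  rw [mem_Vset_iff_locallyActs]
  constructor
  · rintro ⟨f, rfl⟩
    exact f.2
  · exact fun hf => ⟨⟨f.toEquiv, hf⟩, rfl⟩

end PrefixReplacement

/-- A set `X` with an action of the symmetric group of the alphabet, together with an
equivariant identification of `X` with a disjoint union of copies of itself indexed by the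
alphabet. It stands in for `C_m` as a space on which prefix replacements act. -/
structure SelfSimilarSet (m : ℕ) (X : Type*) where
  act : Perm (Fin m) →* Function.End X
  split : X ≃ Fin m × X
  split_act : ∀ g x, split (act g x) = (g (split x).1, act g (split x).2)

namespace SelfSimilarSet

variable {m : ℕ} {X : Type*} (S : SelfSimilarSet m X)

/-- The inclusion of the copy of `X` indexed by a finite word. -/
def incl (p : List (Fin m)) (x : X) : X :=
  p.foldr (fun c y => S.split.symm (c, y)) x

/-- The infinite word recording in which of the nested copies of `X` a point lies. -/
def address (x : X) (j : ℕ) : Fin m :=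
  (S.split ((fun y => (S.split y).2)^[j] x)).1

theorem incl_nil (x : X) : S.incl [] x = x := rfl

theorem incl_cons (c : Fin m) (p : List (Fin m)) (x : X) :
    S.incl (c :: p) x = S.split.symm (c, S.incl p x) := rfl

theorem incl_append (p q : List (Fin m)) (x : X) :
    S.incl (p ++ q) x = S.incl p (S.incl q x) := List.foldr_append

theorem incl_injective (p : List (Fin m)) : Function.Injective (S.incl p) := by
  induction p with
  | nil => exact Function.injective_id
  | cons c p ih =>
    intro x y h
    simpa [incl_cons, ih.eq_iff] using h

theorem act_incl (g : Perm (Fin m)) (p : List (Fin m)) (x : X) :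
    S.act g (S.incl p x) = S.incl (p.map g) (S.act g x) := by
  induction p with
  | nil => rfl
  | cons c p ih =>
    apply S.split.injective
    simp [incl_cons, S.split_act, ih]

theorem address_zero (x : X) : S.address x 0 = (S.split x).1 := rfl

theorem address_succ (x : X) (j : ℕ) : S.address x (j + 1) = S.address (S.split x).2 j := rfl

theorem address_incl (p : List (Fin m)) (x : X) :
    S.address (S.incl p x) = cat p (S.address x) := by
  induction p with
  | nil => rw [incl_nil, cat_nil]
  | cons c p ih =>
    funext j
    cases j with
    | zero => simp [address_zero, incl_cons, cat_cons_zero]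
    | succ j => simp [address_succ, incl_cons, cat_cons_succ, ih]

theorem address_act (g : Perm (Fin m)) (x : X) : S.address (S.act g x) = g ∘ S.address x := by
  funext j
  induction j generalizing x with
  | zero => simp [address_zero, S.split_act]
  | succ j ih => simp [address_succ, S.split_act, ih]

theorem exists_incl_eq_of_isPref {p : List (Fin m)} {x : X} (h : IsPref p (S.address x)) :
    ∃ y, S.incl p y = x := by
  induction p generalizing x with
  | nil => exact ⟨x, rfl⟩
  | cons c p ih =>
    have hc : c = (S.split x).1 := h 0 (Nat.zero_lt_succ _)
    obtain ⟨y, hy⟩ := @ih (S.split x).2 fun i hi => h (i + 1) (Nat.succ_lt_succ hi)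
    exact ⟨y, by rw [incl_cons, hy, hc, Prod.mk.eta, Equiv.symm_apply_apply]⟩

section Lift

variable {G : Subgroup (Perm (Fin m))} {f f' : (ℕ → Fin m) → (ℕ → Fin m)}
  {F F' : X → X}

/-- The map `F` on `X` performs the same prefix replacements as `f` does on `C_m`. -/
def Follows (f : (ℕ → Fin m) → (ℕ → Fin m)) (F : X → X) : Prop :=
  ∀ p q g, ActsOn f p q g → ∀ x, F (S.incl p x) = S.incl q (S.act g x)

variable {S}

theorem Follows.unique (hf : LocallyActs G f) (hF : S.Follows f F) (hF' : S.Follows f F') :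
    F = F' := by
  funext x
  obtain ⟨p, q, g, -, hp, hpq⟩ := hf (S.address x)
  obtain ⟨y, rfl⟩ := S.exists_incl_eq_of_isPref hp
  rw [hF _ _ _ hpq, hF' _ _ _ hpq]

theorem Follows.address_apply (hf : LocallyActs G f) (hF : S.Follows f F) (x : X) :
    S.address (F x) = f (S.address x) := by
  obtain ⟨p, q, g, -, hp, hpq⟩ := hf (S.address x)
  obtain ⟨y, rfl⟩ := S.exists_incl_eq_of_isPref hp
  rw [hF _ _ _ hpq, S.address_incl, S.address_incl, S.address_act, hpq]

variable [Nontrivial (Fin m)]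

variable (S) in
theorem incl_act_eq_of_actsOn {p q p' q' : List (Fin m)} {g g' : Perm (Fin m)} {x x' : X}
    (h : ActsOn f p q g) (h' : ActsOn f p' q' g') (hx : S.incl p x = S.incl p' x') :
    S.incl q (S.act g x) = S.incl q' (S.act g' x') := by
  wlog hl : p.length ≤ p'.length generalizing p q p' q' g g' x x'
  · exact (this h' h hx.symm (le_of_not_ge hl)).symm
  have hp : IsPref p (S.address (S.incl p x)) := S.address_incl p x ▸ isPref_cat p _
  have hp' : IsPref p' (S.address (S.incl p x)) := hx ▸ S.address_incl p' x' ▸ isPref_cat p' _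
  obtain ⟨w, rfl⟩ := hp.prefix_of_length_le hp' hl
  obtain ⟨rfl, rfl⟩ := h'.unique (h.append w)
  obtain rfl : x = S.incl w x' := S.incl_injective p (hx.trans (S.incl_append p w x'))
  rw [S.act_incl, S.incl_append]

theorem exists_follows (hf : LocallyActs G f) : ∃ F, S.Follows f F := by
  choose p q g _ hp hpq using fun x => hf (S.address x)
  choose y hy using fun x => S.exists_incl_eq_of_isPref (hp x)
  exact ⟨fun x => S.incl (q x) (S.act (g x) (y x)), fun _ _ _ h x =>
    S.incl_act_eq_of_actsOn (hpq _) h (hy _)⟩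

theorem follows_id : S.Follows id id := by
  intro p q g h x
  rw [← S.incl_act_eq_of_actsOn (actsOn_id p) h rfl, map_one]
  rfl

theorem Follows.comp (hf' : LocallyActs G f') (hf : LocallyActs G f) (hF' : S.Follows f' F')
    (hF : S.Follows f F) : S.Follows (f' ∘ f) (F' ∘ F) := by
  intro p s h hps x
  obtain ⟨p', q, r, g, -, g', -, hp', hpq, hqr⟩ :=
    hf'.exists_actsOn_actsOn hf (S.address (S.incl p x))
  obtain ⟨y, hy⟩ := S.exists_incl_eq_of_isPref hp'
  calc F' (F (S.incl p x)) = S.incl r (S.act (g' * g) y) := by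
        rw [← hy, hF _ _ _ hpq, hF' _ _ _ hqr, map_mul]
        rfl
    _ = S.incl s (S.act h x) := S.incl_act_eq_of_actsOn (hqr.comp hpq) hps hy

variable (S G)

/-- The action of the symmetric Thompson group on a self-similar set by prefix replacements. -/
noncomputable def lift : thompsonGroup m G →* Perm X :=
  MonoidHom.toHomPerm
    { toFun f := (exists_follows (S := S) f.2).choose
      map_one' := (exists_follows (1 : thompsonGroup m G).2).choose_spec.unique
        (locallyActs_id (H := G)) follows_id
      map_mul' f' f := (exists_follows (f' * f).2).choose_spec.unique (f' * f).2
        (.comp (f' := f'.1) (f := f.1) f'.2 f.2 (exists_follows f'.2).choose_spec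
          (exists_follows f.2).choose_spec) }

variable {G}

theorem follows_lift (f : thompsonGroup m G) : S.Follows f.1 (S.lift G f) :=
  (exists_follows (S := S) f.2).choose_spec

variable {S}

theorem lift_injective (hS : Function.Surjective S.address) :
    Function.Injective (S.lift G) := by
  intro f f' h
  refine Subtype.ext (Equiv.ext fun ζ => ?_)
  obtain ⟨x, rfl⟩ := hS ζ
  rw [← (S.follows_lift f).address_apply f.2, h, (S.follows_lift f').address_apply f'.2]

end Lift

section Embed

variable {n N : ℕ} {E : Type*} {S : SelfSimilarSet m (E × (ℕ → Fin n))}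
  {G : Subgroup (Perm (Fin m))} {H : Subgroup (Perm (Fin n))}

/-- The embedding of `E` copies of the Cantor space as cones of the Cantor space over words of
length `N`. -/
def coneEmbedding (β : E ↪ (Fin N → Fin n)) : E × (ℕ → Fin n) ↪ (ℕ → Fin n) where
  toFun x := cat (List.ofFn (β x.1)) x.2
  inj' := by
    rintro ⟨e, u⟩ ⟨e', u'⟩ (h : cat (List.ofFn (β e)) u = cat (List.ofFn (β e')) u')
    obtain rfl : e = e' := β.injective (eq_of_cat_ofFn_eq h)
    rw [cat_injective _ h]

theorem coneEmbedding_cat (β : E ↪ (Fin N → Fin n)) (e : E) (w : List (Fin n)) (u : ℕ → Fin n) :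
    coneEmbedding β (e, cat w u) = cat (List.ofFn (β e) ++ w) u :=
  (cat_append _ w u).symm

theorem cat_ofFn_mem_range_coneEmbedding_iff {β : E ↪ (Fin N → Fin n)} {v : Fin N → Fin n}
    {u : ℕ → Fin n} : cat (List.ofFn v) u ∈ Set.range (coneEmbedding β) ↔ v ∈ Set.range β := by
  constructor
  · rintro ⟨⟨e, t⟩, h⟩
    exact ⟨e, eq_of_cat_ofFn_eq h⟩
  · rintro ⟨e, rfl⟩
    exact ⟨(e, u), rfl⟩

/-- On a self-similar set made of copies of `C_n`, splitting is a prefix replacement on each copy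
and the elements of `G` act letterwise through `H`. -/
structure IsLetterwise (S : SelfSimilarSet m (E × (ℕ → Fin n))) (G : Subgroup (Perm (Fin m)))
    (H : Subgroup (Perm (Fin n))) : Prop where
  exists_split_symm : ∀ c e, ∃ e' w, ∀ u, S.split.symm (c, (e, u)) = (e', cat w u)
  exists_act : ∀ g ∈ G, ∀ e, ∃ e', ∃ h ∈ H, ∀ u, S.act g (e, u) = (e', h ∘ u)

theorem IsLetterwise.exists_incl (hS : S.IsLetterwise G H) (p : List (Fin m)) (e : E) :
    ∃ e' w, ∀ u, S.incl p (e, u) = (e', cat w u) := by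
  induction p with
  | nil => exact ⟨e, [], fun u => by rw [S.incl_nil, cat_nil]⟩
  | cons c p ih =>
    obtain ⟨e', w, h⟩ := ih
    obtain ⟨e'', w', h'⟩ := hS.exists_split_symm c e'
    exact ⟨e'', w' ++ w, fun u => by rw [S.incl_cons, h, h', cat_append]⟩

theorem IsLetterwise.exists_incl_act (hS : S.IsLetterwise G H) (q : List (Fin m))
    {g : Perm (Fin m)} (hg : g ∈ G) (e : E) :
    ∃ e' w, ∃ h ∈ H, ∀ u, S.incl q (S.act g (e, u)) = (e', cat w (h ∘ u)) := by
  obtain ⟨e', h, hh, hact⟩ := hS.exists_act g hg e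
  obtain ⟨e'', w, hincl⟩ := hS.exists_incl q e'
  exact ⟨e'', w, h, hh, fun u => by rw [hact, hincl]⟩

variable [Nontrivial (Fin m)]

theorem IsLetterwise.viaEmbedding_lift_mem (hS : S.IsLetterwise G H) (β : E ↪ (Fin N → Fin n))
    (f : thompsonGroup m G) :
    (S.lift G f).viaEmbedding (coneEmbedding β) ∈ thompsonGroup n H := by
  intro ξ
  obtain ⟨v, hv, -⟩ := isCPC_ofFn N ξ
  obtain ⟨u, rfl⟩ := hv.exists_cat_eq
  by_cases hβ : v ∈ Set.range β
  · obtain ⟨e, rfl⟩ := hβ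
    obtain ⟨p, q, g, hg, hp, hpq⟩ := f.2 (S.address (e, u))
    obtain ⟨⟨e₁, u₁⟩, hx⟩ := S.exists_incl_eq_of_isPref hp
    obtain ⟨e₂, w, hincl⟩ := hS.exists_incl p e₁
    obtain ⟨e₃, w', h, hh, hact⟩ := hS.exists_incl_act q hg e₁
    obtain ⟨rfl, rfl⟩ : e₂ = e ∧ cat w u₁ = u := Prod.mk.inj ((hincl u₁).symm.trans hx)
    refine ⟨List.ofFn (β e₂) ++ w, List.ofFn (β e₃) ++ w', h, hh,
      isPref_append_cat_iff.2 (isPref_cat w u₁), fun s => ?_⟩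
    rw [← coneEmbedding_cat, ← hincl, Perm.viaEmbedding_apply, S.follows_lift f p q g hpq, hact,
      coneEmbedding_cat]
  · exact ⟨List.ofFn v, List.ofFn v, 1, H.one_mem, hv, fun s =>
      Perm.viaEmbedding_apply_of_notMem _ _ _ (mt cat_ofFn_mem_range_coneEmbedding_iff.1 hβ)⟩

theorem IsLetterwise.exists_injective_hom [Finite E] [Nontrivial (Fin n)]
    (hS : S.IsLetterwise G H) (haddr : Function.Surjective S.address) :
    ∃ ψ : thompsonGroup m G →* thompsonGroup n H, Function.Injective ψ := by
  obtain ⟨N, ⟨β⟩⟩ := exists_embedding_words E n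
  let ψ : thompsonGroup m G →* Perm (ℕ → Fin n) :=
    (Perm.viaEmbeddingHom (coneEmbedding β)).comp (S.lift G)
  have hψ : Function.Injective ψ :=
    (Perm.viaEmbeddingHom_injective (coneEmbedding β)).comp (lift_injective haddr)
  exact ⟨ψ.codRestrict (thompsonGroup n H) (hS.viaEmbedding_lift_mem β),
    (MonoidHom.injective_codRestrict _ _ _).2 hψ⟩

end Embed

end SelfSimilarSet

section CantorCopies

variable {m k n : ℕ} [NeZero k]

/-- The pairs `(c, b)` such that the copy `(c, (a, b))` in `Fin m × (Fin m × Fin k)` is not one of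
the copies `(a, (a, b))` with `b ≠ 0`. -/
abbrev Letter (k : ℕ) [NeZero k] (a : Fin m) : Type :=
  {x : Fin m × Fin k // x.1 = a → x.2 = 0}

theorem card_letter (a : Fin m) : Fintype.card (Letter k a) = (m - 1) * k + 1 := by
  have h : ({x | x.1 = a → x.2 = 0} : Finset (Fin m × Fin k)) =
      insert (a, 0) ({a}ᶜ ×ˢ Finset.univ) := by
    ext ⟨c, b⟩
    by_cases hc : c = a <;> simp [hc]
  rw [Fintype.card_subtype, h, Finset.card_insert_of_notMem (by simp), Finset.card_product,
    Finset.card_compl, Finset.card_singleton, Finset.card_univ, Fintype.card_fin, Fintype.card_fin]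

/-- The relabelling of letters `(c, b) ↦ (g c, b)`, which moves the distinguished letter of the
alphabet from `a` to `g a`. -/
def letterEquiv (g : Perm (Fin m)) (a : Fin m) : Letter k a ≃ Letter k (g a) :=
  (Equiv.prodCongr g 1).subtypeEquiv fun x => by simp

/-- The permutation of `Fin n` induced by `letterEquiv g a`. -/
def letterPerm (ε : ∀ a : Fin m, Letter k a ≃ Fin n) (g : Perm (Fin m)) (a : Fin m) :
    Perm (Fin n) :=
  (ε a).symm.trans ((letterEquiv g a).trans (ε (g a)))

theorem symm_letterPerm (ε : ∀ a : Fin m, Letter k a ≃ Fin n) (g : Perm (Fin m)) (a : Fin m)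
    (z : Fin n) : (ε (g a)).symm (letterPerm ε g a z) = letterEquiv g a ((ε a).symm z) := by
  simp [letterPerm]

theorem letterPerm_one (ε : ∀ a : Fin m, Letter k a ≃ Fin n) (a : Fin m) :
    letterPerm ε 1 a = 1 :=
  Equiv.ext fun z => (ε a).apply_symm_apply z

theorem letterPerm_mul (ε : ∀ a : Fin m, Letter k a ≃ Fin n) (g h : Perm (Fin m)) (a : Fin m) :
    letterPerm ε (g * h) a = letterPerm ε g (h a) * letterPerm ε h a := by
  refine Equiv.ext fun z => ?_
  simp only [letterPerm, Perm.mul_apply, Equiv.trans_apply, Equiv.symm_apply_apply]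
  rfl

/-- The action of `Sym(m)` on copies of `C_n` indexed by pairs, where `g` maps the copy `(a, b)` to
the copy `(g a, b)` by `letterPerm`. -/
def cantorAct (ε : ∀ a : Fin m, Letter k a ≃ Fin n) :
    Perm (Fin m) →* Function.End ((Fin m × Fin k) × (ℕ → Fin n)) where
  toFun g x := ((g x.1.1, x.1.2), letterPerm ε g x.1.1 ∘ x.2)
  map_one' := by
    funext x
    simp only [letterPerm_one]
    rfl
  map_mul' g h := by
    funext x
    simp only [letterPerm_mul]
    rfl

theorem cantorAct_apply (ε : ∀ a : Fin m, Letter k a ≃ Fin n) (g : Perm (Fin m)) (a : Fin m)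
    (b : Fin k) (u : ℕ → Fin n) :
    cantorAct ε g ((a, b), u) = ((g a, b), letterPerm ε g a ∘ u) := rfl

/-- An identification of `k` copies of `C_n` with `m k` copies: the copy `0` is split into its `n`
cones, which become the copies listed in `Letter k a`; every other copy `b` is left whole and
becomes `(a, b)`. -/
def splitAt {a : Fin m} (ε : Letter k a ≃ Fin n) :
    Fin k × (ℕ → Fin n) ≃ Fin m × (Fin k × (ℕ → Fin n)) where
  toFun x :=
    if x.1 = 0 then ((ε.symm (x.2 0)).1.1, ((ε.symm (x.2 0)).1.2, fun j => x.2 (j + 1)))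
    else (a, x)
  invFun y :=
    if h : y.1 = a → y.2.1 = 0 then (0, cat [ε ⟨(y.1, y.2.1), h⟩] y.2.2) else y.2
  left_inv := by
    rintro ⟨b, u⟩
    by_cases hb : b = 0
    · have h := (ε.symm (u 0)).2
      simp [hb, dif_pos h, cat_head_tail]
    · simp [hb]
  right_inv := by
    rintro ⟨c, b, u⟩
    by_cases h : c = a → b = 0
    · simp [dif_pos h, cat_cons_zero, cat_cons_succ, cat_nil]
    · obtain ⟨rfl, hb⟩ := Classical.not_imp.1 h
      simp [hb]

theorem splitAt_zero {a : Fin m} (ε : Letter k a ≃ Fin n) (u : ℕ → Fin n) :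
    splitAt ε (0, u) = ((ε.symm (u 0)).1.1, ((ε.symm (u 0)).1.2, fun j => u (j + 1))) :=
  by simp [splitAt]

theorem splitAt_of_ne_zero {a : Fin m} (ε : Letter k a ≃ Fin n) {b : Fin k} (hb : b ≠ 0)
    (u : ℕ → Fin n) : splitAt ε (b, u) = (a, (b, u)) :=
  if_neg hb

theorem exists_splitAt_symm {a : Fin m} (ε : Letter k a ≃ Fin n) (c : Fin m) (b : Fin k) :
    ∃ b' w, ∀ u, (splitAt ε).symm (c, (b, u)) = (b', cat w u) := by
  by_cases h : c = a → b = 0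
  · exact ⟨0, [ε ⟨(c, b), h⟩], fun u => dif_pos h⟩
  · exact ⟨b, [], fun u => (cat_nil u).symm ▸ dif_neg h⟩

/-- The self-similar set consisting of the copies of `C_n` indexed by `Fin m × Fin k`, where for
each `a` the copies `(a, b)` are split by `splitAt (ε a)`. -/
def cantorCopies (ε : ∀ a : Fin m, Letter k a ≃ Fin n) :
    SelfSimilarSet m ((Fin m × Fin k) × (ℕ → Fin n)) where
  act := cantorAct ε
  split :=
    { toFun x :=
        let y := splitAt (ε x.1.1) (x.1.2, x.2)
        (y.1, ((x.1.1, y.2.1), y.2.2))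
      invFun y :=
        let x := (splitAt (ε y.2.1.1)).symm (y.1, (y.2.1.2, y.2.2))
        ((y.2.1.1, x.1), x.2)
      left_inv x := by simp
      right_inv y := by simp }
  split_act g x := by
    obtain ⟨⟨a, b⟩, u⟩ := x
    by_cases hb : b = 0
    · simp [cantorAct_apply, hb, splitAt_zero, symm_letterPerm, letterEquiv, Function.comp_def]
    · simp [cantorAct_apply, splitAt_of_ne_zero _ hb]

theorem isLetterwise_cantorCopies (ε : ∀ a : Fin m, Letter k a ≃ Fin n)
    (G : Subgroup (Perm (Fin m))) : (cantorCopies ε).IsLetterwise G ⊤ where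
  exists_split_symm c e := by
    obtain ⟨b, w, h⟩ := exists_splitAt_symm (ε e.1) c e.2
    exact ⟨(e.1, b), w, fun u => by simp [cantorCopies, h]⟩
  exists_act g _ e := ⟨(g e.1, e.2), letterPerm ε g e.1, Subgroup.mem_top _, fun _ => rfl⟩

theorem address_cantorCopies_surjective (ε : ∀ a : Fin m, Letter k a ≃ Fin n) :
    Function.Surjective (cantorCopies ε).address := by
  let point (a : Fin m) (ζ : ℕ → Fin m) : (Fin m × Fin k) × (ℕ → Fin n) :=
    ((a, 0), fun j => ε a ⟨(ζ j, 0), fun _ => rfl⟩)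
  have split_point (a : Fin m) (ζ : ℕ → Fin m) :
      (cantorCopies ε).split (point a ζ) = (ζ 0, point a fun j => ζ (j + 1)) := by
    simp [cantorCopies, splitAt_zero, point]
  intro ζ
  refine ⟨point (ζ 0) ζ, ?_⟩
  generalize ζ 0 = a
  funext j
  induction j generalizing ζ with
  | zero => rw [SelfSimilarSet.address_zero, split_point]
  | succ j ih => rw [SelfSimilarSet.address_succ, split_point, ih]

end CantorCopies

theorem exists_injective_hom_thompsonGroup {m k n : ℕ} (hm : 2 ≤ m) (hk : k ≠ 0)
    (hn : n = (m - 1) * k + 1) (G : Subgroup (Perm (Fin m))) :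
    ∃ ψ : thompsonGroup m G →* thompsonGroup n ⊤, Function.Injective ψ := by
  have : NeZero k := ⟨hk⟩
  have : Nontrivial (Fin m) := Fin.nontrivial_iff_two_le.2 hm
  have : Nontrivial (Fin n) := by
    have : 0 < (m - 1) * k := Nat.mul_pos (by omega) (Nat.pos_of_ne_zero hk)
    exact Fin.nontrivial_iff_two_le.2 (by omega)
  let ε (a : Fin m) : Letter k a ≃ Fin n := Fintype.equivFinOfCardEq ((card_letter a).trans hn.symm)
  exact (isLetterwise_cantorCopies ε G).exists_injective_hom (address_cantorCopies_surjective ε)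

/-- **Corollary.** Let `2 ≤ m ≤ n` with `n ≡ m (mod m-1)` and let
`G ≤ Sym(m)`.  Then there is a subgroup `H ≤ Sym(n)` such that `V_m(G)` embeds in
`V_n(H)`. -/
theorem stmt11 (m n : ℕ) (hm : 2 ≤ m) (hmn : m ≤ n) (hmod : n ≡ m [MOD m - 1])
    (G : Subgroup (Equiv.Perm (Fin m))) :
    ∃ H : Subgroup (Equiv.Perm (Fin n)),
      ∃ Φ : ((ℕ → Fin m) ≃ₜ (ℕ → Fin m)) → ((ℕ → Fin n) ≃ₜ (ℕ → Fin n)),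
        (∀ f ∈ Vset m G, Φ f ∈ Vset n H) ∧
        Set.InjOn Φ (Vset m G) ∧
        ∀ f ∈ Vset m G, ∀ g ∈ Vset m G, Φ (f.trans g) = (Φ f).trans (Φ g) := by
  obtain ⟨d, hd⟩ := (Nat.modEq_iff_dvd' hmn).1 hmod.symm
  have hn : n = (m - 1) * (d + 1) + 1 := by
    rw [Nat.mul_succ]
    omega
  obtain ⟨ψ, hψ⟩ := exists_injective_hom_thompsonGroup hm d.succ_ne_zero hn G
  let ι := thompsonGroup.toHomeomorph m G
  let κ := thompsonGroup.toHomeomorph n ⊤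
  let Φ := Function.extend ι (κ ∘ ψ) fun _ => 1
  have hΦ (a : thompsonGroup m G) : Φ (ι a) = κ (ψ a) :=
    thompsonGroup.toHomeomorph_injective.extend_apply _ _ a
  simp only [← thompsonGroup.range_toHomeomorph]
  refine ⟨⊤, Φ, ?_, ?_, ?_⟩
  · rintro _ ⟨a, rfl⟩
    exact ⟨ψ a, (hΦ a).symm⟩
  · rintro _ ⟨a, rfl⟩ _ ⟨b, rfl⟩ h
    rw [hψ (thompsonGroup.toHomeomorph_injective ((hΦ a).symm.trans (h.trans (hΦ b))))]
  · rintro _ ⟨a, rfl⟩ _ ⟨b, rfl⟩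
    calc Φ (ι (b * a)) = κ (ψ b) * κ (ψ a) := by rw [hΦ, map_mul, map_mul]
      _ = (Φ (ι a)).trans (Φ (ι b)) := by rw [hΦ, hΦ]; rfl

end Paper
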